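/- arXiv:2302.01077 — 4 statements merged into one kernel-verified Lean document; each statement's English description precedes it below -/
import Mathlib

section
/- Let U be a unitary operator on H and let C be an A-component of G_∞(H) such that U(X) ∈ C for every X ∈ C and U maps C onto C. Define f : G_∞(H) → G_∞(H) by f(X) = U(X) if X ∈ C and f(X) = X if X ∉ C. Then f is a bijective transformation of G_∞(H) which preserves the ortho-adjacency relation in both directions. -/
open Module Submodule Classical

variable {H : Type*} [NormedAddCommGroup H] [InnerProductSpace ℂ H] [CompleteSpace H]

/-- The orthogonal projection of `H` onto a closed subspace `K`, as a map `H →L[ℂ] H`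
(defined to be `0` if `K` is not closed). -/
noncomputable def projCLM (K : Submodule ℂ H) : H →L[ℂ] H :=
  if h : IsClosed (K : Set H) then
    haveI : CompleteSpace K := h.completeSpace_coe
    K.subtypeL.comp (orthogonalProjection K)
  else 0

/-- Two (closed) subspaces are compatible if their orthogonal projections commute. -/
def Compatible (K L : Submodule ℂ H) : Prop := Commute (projCLM K) (projCLM L)

/-- `W` is a subspace of `X` of finite codimension `n` in `X`. -/
def CodimIn (W X : Submodule ℂ H) (n : ℕ) : Prop :=
  W ≤ X ∧ FiniteDimensional ℂ (↥X ⧸ W.comap X.subtype) ∧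
    finrank ℂ (↥X ⧸ W.comap X.subtype) = n

/-- `X` and `Y` are adjacent: `X ∩ Y` is a hyperplane in both `X` and `Y`. -/
def Adjacent (X Y : Submodule ℂ H) : Prop :=
  CodimIn (X ⊓ Y) X 1 ∧ CodimIn (X ⊓ Y) Y 1

/-- `X` and `Y` are ortho-adjacent: adjacent and compatible. -/
def OrthoAdjacent (X Y : Submodule ℂ H) : Prop := Adjacent X Y ∧ Compatible X Y

/-- The Grassmannian `G_∞(H)` of closed subspaces of `H` whose dimension and
codimension both are infinite. -/
def Ginf : Set (Submodule ℂ H) :=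
  {X | IsClosed (X : Set H) ∧ ¬FiniteDimensional ℂ X ∧ ¬FiniteDimensional ℂ Xᗮ}

/-- `X ∩ Y` has the same finite codimension in both `X` and `Y`. -/
def SameFinCodim (X Y : Submodule ℂ H) : Prop :=
  ∃ n : ℕ, CodimIn (X ⊓ Y) X n ∧ CodimIn (X ⊓ Y) Y n

/-- An `A`-component of `G_∞(H)`: a set of elements pairwise at the same finite
codimension, maximal with respect to this property. -/
def IsAComponent (C : Set (Submodule ℂ H)) : Prop :=
  C ⊆ Ginf ∧ (∀ X ∈ C, ∀ Y ∈ C, SameFinCodim X Y) ∧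
    ∀ D : Set (Submodule ℂ H), D ⊆ Ginf → (∀ X ∈ D, ∀ Y ∈ D, SameFinCodim X Y) →
      C ⊆ D → D = C

/-- The star `S(X)`: all closed subspaces of `H` containing `X` as a hyperplane. -/
def starSet (X : Submodule ℂ H) : Set (Submodule ℂ H) :=
  {Y | IsClosed (Y : Set H) ∧ CodimIn X Y 1}

/-- The top `G¹(X)`: all closed hyperplanes of `X`. -/
def topSet (X : Submodule ℂ H) : Set (Submodule ℂ H) :=
  {M | IsClosed (M : Set H) ∧ CodimIn M X 1}

/-- The image `U(M)` of a subspace `M ⊆ X` under a linear isometry `U : X ≃ X'`,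
viewed as a subspace of `H`. -/
def imL (X X' : Submodule ℂ H) (U : ↥X ≃ₗᵢ[ℂ] ↥X') (M : Submodule ℂ H) : Submodule ℂ H :=
  Submodule.map X'.subtype (Submodule.map U.toLinearEquiv.toLinearMap (M.comap X.subtype))

/-- The image `U(M)` of a subspace `M ⊆ X` under a conjugate-linear isometry `U : X ≃ X'`,
viewed as a subspace of `H`. -/
def imC (X X' : Submodule ℂ H) (U : ↥X ≃ₗᵢ⋆[ℂ] ↥X') (M : Submodule ℂ H) : Submodule ℂ H :=
  Submodule.map X'.subtype (Submodule.map U.toLinearEquiv.toLinearMap (M.comap X.subtype))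

/-- The Grassmannian `G_k(H)` of `k`-dimensional subspaces of `H`. -/
def Gk (k : ℕ) : Set (Submodule ℂ H) :=
  {X | FiniteDimensional ℂ X ∧ finrank ℂ X = k}

/-- The Grassmannian `G^k(H)` of closed subspaces of `H` of codimension `k`. -/
def GCk (k : ℕ) : Set (Submodule ℂ H) :=
  {X | IsClosed (X : Set H) ∧ FiniteDimensional ℂ (H ⧸ X) ∧ finrank ℂ (H ⧸ X) = k}


theorem aux_codim_iff (W X : Submodule ℂ H) (n : ℕ) :
    CodimIn W X n ↔ W ≤ X ∧ Module.rank ℂ (↥X ⧸ W.comap X.subtype) = n := by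
  unfold CodimIn
  constructor
  · rintro ⟨h, hf, hn⟩
    refine ⟨h, ?_⟩
    rw [← hn, finrank_eq_rank]
  · rintro ⟨h, hn⟩
    refine ⟨h, ?_, finrank_eq_of_rank_eq hn⟩
    apply Module.rank_lt_aleph0_iff.mp
    rw [hn]
    exact Cardinal.natCast_lt_aleph0

theorem aux_add (W V X : Submodule ℂ H) (h1 : W ≤ V) (h2 : V ≤ X) :
    Module.rank ℂ (↥X ⧸ W.comap X.subtype) =
      Module.rank ℂ (↥X ⧸ V.comap X.subtype) + Module.rank ℂ (↥V ⧸ W.comap V.subtype) := by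
  let f : (↥V ⧸ W.comap V.subtype) →ₗ[ℂ] (↥X ⧸ W.comap X.subtype) :=
    Submodule.mapQ _ _ (Submodule.inclusion h2) (by intro x hx; simpa using hx)
  let g : (↥X ⧸ W.comap X.subtype) →ₗ[ℂ] (↥X ⧸ V.comap X.subtype) :=
    Submodule.mapQ _ _ LinearMap.id (by intro x hx; exact h1 hx)
  have hf : Function.Injective f := by
    rw [← LinearMap.ker_eq_bot, LinearMap.ker_eq_bot']
    intro m
    induction m using Submodule.Quotient.induction_on with
    | _ x =>
    intro hx
    simp only [f, Submodule.mapQ_apply, Submodule.Quotient.mk_eq_zero] at hx ⊢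
    simpa using hx
  have hg : Function.Surjective g := by
    intro m
    induction m using Submodule.Quotient.induction_on with
    | _ x => exact ⟨Submodule.Quotient.mk x, rfl⟩
  have hfg : LinearMap.range f = LinearMap.ker g := by
    ext m
    induction m using Submodule.Quotient.induction_on with
    | _ x =>
    constructor
    · rintro ⟨y, hy⟩
      rw [← hy]
      induction y using Submodule.Quotient.induction_on with
      | _ y =>
      simp [f, g, Submodule.Quotient.mk_eq_zero]
    · intro hx
      simp only [g, LinearMap.mem_ker, Submodule.mapQ_apply, Submodule.Quotient.mk_eq_zero] at hx
      exact ⟨Submodule.Quotient.mk ⟨x.1, by simpa using hx⟩, rfl⟩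
  rw [← LinearMap.rank_range_add_rank_ker g, ← hfg, rank_range_of_surjective g hg,
    rank_range_of_injective f hf]

theorem aux_mono (X Y Z : Submodule ℂ H) :
    Module.rank ℂ (↥(X ⊓ Y) ⧸ (X ⊓ Y ⊓ Z).comap (X ⊓ Y).subtype) ≤
      Module.rank ℂ (↥Y ⧸ (Y ⊓ Z).comap Y.subtype) := by
  let f : (↥(X ⊓ Y) ⧸ (X ⊓ Y ⊓ Z).comap (X ⊓ Y).subtype) →ₗ[ℂ] (↥Y ⧸ (Y ⊓ Z).comap Y.subtype) :=
    Submodule.mapQ _ _ (Submodule.inclusion inf_le_right) (by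
      rintro ⟨x, hx⟩ h
      simp at h ⊢
      tauto)
  apply LinearMap.rank_le_of_injective f
  rw [← LinearMap.ker_eq_bot, LinearMap.ker_eq_bot']
  intro m
  induction m using Submodule.Quotient.induction_on with
  | _ x =>
  intro hx
  obtain ⟨x, hx'⟩ := x
  simp only [f, Submodule.mapQ_apply, Submodule.Quotient.mk_eq_zero] at hx ⊢
  simp at hx hx' ⊢
  tauto

theorem aux_symm {X Y : Submodule ℂ H} (h : SameFinCodim X Y) : SameFinCodim Y X := by
  obtain ⟨n, h1, h2⟩ := h
  rw [inf_comm] at h1 h2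
  exact ⟨n, h2, h1⟩

theorem aux_refl (X : Submodule ℂ H) : SameFinCodim X X := by
  have : CodimIn (X ⊓ X) X 0 := by
    rw [aux_codim_iff]
    refine ⟨inf_le_left, ?_⟩
    have : (X ⊓ X).comap X.subtype = ⊤ := by ext x; simp
    rw [this]
    simp
  exact ⟨0, this, this⟩

theorem aux_trans {X Y Z : Submodule ℂ H} (h : SameFinCodim X Y) (h' : SameFinCodim Y Z) :
    SameFinCodim X Z := by
  obtain ⟨n, h1, h2⟩ := h
  obtain ⟨m, h3, h4⟩ := h'
  rw [aux_codim_iff] at h1 h2 h3 h4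
  have e1 := aux_add (X ⊓ Y ⊓ Z) (X ⊓ Y) X inf_le_left inf_le_left
  have e2 := aux_add (X ⊓ Y ⊓ Z) (X ⊓ Y) Y inf_le_left inf_le_right
  have l3 : X ⊓ Y ⊓ Z ≤ Y ⊓ Z := by
    rw [inf_assoc]; exact inf_le_right
  have e3 := aux_add (X ⊓ Y ⊓ Z) (Y ⊓ Z) Y l3 inf_le_left
  have e4 := aux_add (X ⊓ Y ⊓ Z) (Y ⊓ Z) Z l3 inf_le_right
  have l5 : X ⊓ Y ⊓ Z ≤ X ⊓ Z := inf_le_inf_right _ inf_le_left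
  have e5 := aux_add (X ⊓ Y ⊓ Z) (X ⊓ Z) X l5 inf_le_left
  have e6 := aux_add (X ⊓ Y ⊓ Z) (X ⊓ Z) Z l5 inf_le_right
  have hm := aux_mono X Y Z
  rw [h3.2] at hm
  obtain ⟨a, ha⟩ := Cardinal.lt_aleph0.mp (hm.trans_lt Cardinal.natCast_lt_aleph0)
  rw [h1.2, ha] at e1
  rw [h2.2, ha] at e2
  rw [h3.2] at e3
  rw [h4.2] at e4
  rw [← e3, e2, ] at e4
  rw [e1] at e5
  rw [e4] at e6
  have hlt : (n : Cardinal) + a < Cardinal.aleph0 :=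
    Cardinal.add_lt_aleph0 Cardinal.natCast_lt_aleph0 Cardinal.natCast_lt_aleph0
  obtain ⟨b, hb⟩ := Cardinal.lt_aleph0.mp ((self_le_add_left _ _).trans_lt (e5 ▸ hlt))
  obtain ⟨c, hc⟩ := Cardinal.lt_aleph0.mp ((self_le_add_right _ _).trans_lt (e5 ▸ hlt))
  obtain ⟨d, hd⟩ := Cardinal.lt_aleph0.mp ((self_le_add_right _ _).trans_lt (e6 ▸ hlt))
  rw [hb, hc] at e5
  rw [hb, hd] at e6
  norm_cast at e5 e6
  refine ⟨c, ?_, ?_⟩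
  · rw [aux_codim_iff]; exact ⟨inf_le_left, hc⟩
  · rw [aux_codim_iff]; refine ⟨inf_le_right, ?_⟩
    rw [hd]; congr 1; omega

theorem aux_mem {C : Set (Submodule ℂ H)} (hC : IsAComponent C) {X Y : Submodule ℂ H}
    (hX : X ∈ C) (hY : Y ∈ Ginf (H := H)) (h : SameFinCodim X Y) : Y ∈ C := by
  obtain ⟨h1, h2, h3⟩ := hC
  have := h3 (insert Y C) (Set.insert_subset hY h1) ?_ (Set.subset_insert _ _)
  · rw [← this]; exact Set.mem_insert _ _
  · have key : ∀ Z ∈ C, SameFinCodim Y Z := fun Z hZ => aux_trans (aux_symm h) (h2 X hX Z hZ)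
    rintro A (rfl | hA) B (rfl | hB)
    · exact aux_refl _
    · exact key _ hB
    · exact aux_symm (key _ hA)
    · exact h2 _ hA _ hB

theorem aux_map_codim (U : H ≃ₗᵢ[ℂ] H) (W X : Submodule ℂ H) (n : ℕ) :
    CodimIn (W.map U.toLinearEquiv.toLinearMap) (X.map U.toLinearEquiv.toLinearMap) n ↔
      CodimIn W X n := by
  rw [aux_codim_iff, aux_codim_iff]
  have hle : W.map U.toLinearEquiv.toLinearMap ≤ X.map U.toLinearEquiv.toLinearMap ↔ W ≤ X :=
    Submodule.map_le_map_iff_of_injective U.injective _ _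
  rw [hle]
  have e : (↥X ⧸ W.comap X.subtype) ≃ₗ[ℂ]
      (↥(X.map U.toLinearEquiv.toLinearMap) ⧸
        (W.map U.toLinearEquiv.toLinearMap).comap (X.map U.toLinearEquiv.toLinearMap).subtype) := by
    refine Submodule.Quotient.equiv _ _ (U.toLinearEquiv.submoduleMap X) ?_
    ext ⟨y, hy⟩
    constructor
    · rintro ⟨x, hx, hxy⟩
      exact ⟨x.1, hx, congrArg Subtype.val hxy⟩
    · rintro ⟨x, hx, hxy⟩
      obtain ⟨x', hx', hxy'⟩ := hy
      have : x = x' := U.injective (hxy.trans hxy'.symm)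
      subst this
      exact ⟨⟨x, hx'⟩, hx, Subtype.ext hxy⟩
  rw [e.rank_eq]

theorem aux_proj_map (U : H ≃ₗᵢ[ℂ] H) (X : Submodule ℂ H) (hX : IsClosed (X : Set H)) (x : H) :
    projCLM (X.map U.toLinearEquiv.toLinearMap) x = U (projCLM X (U.symm x)) := by
  have hc : IsClosed ((X.map U.toLinearEquiv.toLinearMap : Submodule ℂ H) : Set H) := by
    rw [Submodule.map_coe]
    exact U.toHomeomorph.isClosed_image.mpr hX
  haveI : CompleteSpace X := hX.completeSpace_coe
  haveI : CompleteSpace (X.map U.toLinearEquiv.toLinearMap) := hc.completeSpace_coe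
  unfold projCLM
  rw [dif_pos hc, dif_pos hX]
  exact Submodule.starProjection_map_apply U X x

theorem aux_compat (U : H ≃ₗᵢ[ℂ] H) (X Y : Submodule ℂ H) (hX : IsClosed (X : Set H))
    (hY : IsClosed (Y : Set H)) :
    Compatible (X.map U.toLinearEquiv.toLinearMap) (Y.map U.toLinearEquiv.toLinearMap) ↔
      Compatible X Y := by
  unfold Compatible Commute SemiconjBy
  constructor
  · intro h
    ext x
    have := congrArg (fun T : H →L[ℂ] H => T (U x)) h
    simpa [aux_proj_map, hX, hY] using this
  · intro h
    ext x
    have := congrArg (fun T : H →L[ℂ] H => T (U.symm x)) h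
    simpa [aux_proj_map, hX, hY] using this

theorem aux_ortho (U : H ≃ₗᵢ[ℂ] H) (X Y : Submodule ℂ H) (hX : IsClosed (X : Set H))
    (hY : IsClosed (Y : Set H)) :
    OrthoAdjacent (X.map U.toLinearEquiv.toLinearMap) (Y.map U.toLinearEquiv.toLinearMap) ↔
      OrthoAdjacent X Y := by
  unfold OrthoAdjacent Adjacent
  rw [aux_compat U X Y hX hY, ← Submodule.map_inf _ U.injective, aux_map_codim, aux_map_codim]

/-- if `U` is a unitary operator mapping an `A`-component `C` onto itself, then
the map equal to `U` on `C` and the identity off `C` is a bijective transformation of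
`G_∞(H)` preserving ortho-adjacency in both directions. -/
theorem stmt14 (hH : ¬FiniteDimensional ℂ H)
    (U : H ≃ₗᵢ[ℂ] H) (C : Set (Submodule ℂ H)) (hC : IsAComponent C)
    (hUC : ∀ X ∈ C, X.map U.toLinearEquiv.toLinearMap ∈ C)
    (hUonto : (fun X : Submodule ℂ H => X.map U.toLinearEquiv.toLinearMap) '' C = C) :
    Set.BijOn (fun X : Submodule ℂ H =>
        if X ∈ C then X.map U.toLinearEquiv.toLinearMap else X)
      (Ginf (H := H)) (Ginf (H := H)) ∧
    ∀ X ∈ Ginf (H := H), ∀ Y ∈ Ginf (H := H),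
      OrthoAdjacent X Y ↔
        OrthoAdjacent (if X ∈ C then X.map U.toLinearEquiv.toLinearMap else X)
          (if Y ∈ C then Y.map U.toLinearEquiv.toLinearMap else Y) := by
  have hinj : Function.Injective (fun X : Submodule ℂ H => X.map U.toLinearEquiv.toLinearMap) :=
    Submodule.map_injective_of_injective U.injective
  have hadj : ∀ X Y : Submodule ℂ H, OrthoAdjacent X Y → SameFinCodim X Y :=
    fun X Y h => ⟨1, h.1⟩
  refine ⟨⟨?_, ?_, ?_⟩, ?_⟩
  · intro X hX
    by_cases h : X ∈ C
    · simp only [h, if_true]; exact hC.1 (hUC X h)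
    · simpa only [h, if_false] using hX
  · intro X hX Y hY hXY
    by_cases h : X ∈ C <;> by_cases h' : Y ∈ C <;> simp only [h, h', if_true, if_false] at hXY
    · exact hinj hXY
    · exact absurd (hXY ▸ hUC X h) h'
    · exact absurd (hXY ▸ hUC Y h') h
    · exact hXY
  · intro Y hY
    by_cases h : Y ∈ C
    · rw [← hUonto] at h
      obtain ⟨X, hX, rfl⟩ := h
      exact ⟨X, hC.1 hX, by simp only [hX, if_true]⟩
    · exact ⟨Y, hY, by simp only [h, if_false]⟩
  · intro X hX Y hY
    by_cases h : X ∈ C <;> by_cases h' : Y ∈ C <;> simp only [h, h', if_true, if_false]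
    · exact (aux_ortho U X Y hX.1 hY.1).symm
    · exact ⟨fun k => absurd (aux_mem hC h hY (hadj _ _ k)) h',
        fun k => absurd (aux_mem hC (hUC X h) hY (hadj _ _ k)) h'⟩
    · exact ⟨fun k => absurd (aux_mem hC h' hX (aux_symm (hadj _ _ k))) h,
        fun k => absurd (aux_mem hC (hUC Y h') hX (aux_symm (hadj _ _ k))) h⟩
end

section
/- Let k be a positive integer and let f be a bijective transformation of G^k(H), the set of closed subspaces of H of codimension k, which preserves the ortho-adjacency relation in both directions. Then the map g : G_k(H) → G_k(H) defined by g(X) = f(X^⊥)^⊥ is a bijective transformation of the set G_k(H) of k-dimensional subspaces of H which preserves the ortho-adjacency relation in both directions; moreover, if g is induced by a unitary or anti-unitary operator U (i.e., g(X) = U(X) for all X ∈ G_k(H)), then f(Y) = U(Y) for all Y ∈ G^k(H). -/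
open Module Submodule Classical

variable {H : Type*} [NormedAddCommGroup H] [InnerProductSpace ℂ H] [CompleteSpace H]

noncomputable def oaQuot (W X : Submodule ℂ H) (hW : IsClosed (W : Set H)) (h : W ≤ X) :
    (↥X ⧸ W.comap X.subtype) ≃ₗ[ℂ] ↥(X ⊓ Wᗮ) :=
  haveI : CompleteSpace W := hW.completeSpace_coe
  (Submodule.quotientEquivOfIsCompl (W.comap X.subtype) (Wᗮ.comap X.subtype) (by
    constructor
    · rw [disjoint_iff, ← Submodule.comap_inf, Submodule.inf_orthogonal_eq_bot]
      simp
    · rw [codisjoint_iff, eq_top_iff]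
      rintro ⟨x, hx⟩ -
      obtain ⟨y, hy, z, hz, rfl⟩ := W.exists_add_mem_mem_orthogonal x
      have hzX : z ∈ X := by simpa using X.sub_mem hx (h hy)
      exact Submodule.mem_sup.2 ⟨⟨y, h hy⟩, hy, ⟨z, hzX⟩, hz, rfl⟩)).trans
  ((Submodule.equivMapOfInjective X.subtype X.injective_subtype _).trans
    (LinearEquiv.ofEq _ _ (by rw [Submodule.map_comap_subtype])))

theorem oa_equiv {A B : Type*} [AddCommGroup A] [AddCommGroup B] [Module ℂ A] [Module ℂ B]
    (e : A ≃ₗ[ℂ] B) (n : ℕ) :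
    (FiniteDimensional ℂ A ∧ finrank ℂ A = n) ↔ (FiniteDimensional ℂ B ∧ finrank ℂ B = n) := by
  rw [e.finrank_eq]
  exact and_congr_left fun _ => ⟨fun _ => e.finiteDimensional, fun _ => e.symm.finiteDimensional⟩

theorem codimIn_iff (W X : Submodule ℂ H) (hW : IsClosed (W : Set H)) (h : W ≤ X) (n : ℕ) :
    CodimIn W X n ↔ FiniteDimensional ℂ ↥(X ⊓ Wᗮ) ∧ finrank ℂ ↥(X ⊓ Wᗮ) = n := by
  unfold CodimIn
  rw [oa_equiv (oaQuot W X hW h) n]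
  exact and_iff_right h

theorem oa_perp_perp {X : Submodule ℂ H} (h : IsClosed (X : Set H)) : Xᗮᗮ = X := by
  rw [Submodule.orthogonal_orthogonal_eq_closure, h.submodule_topologicalClosure_eq]

theorem codim_perp (X Y : Submodule ℂ H) [FiniteDimensional ℂ X] [FiniteDimensional ℂ Y] (n : ℕ) :
    CodimIn (Xᗮ ⊓ Yᗮ) Xᗮ n ↔ CodimIn (X ⊓ Y) Y n := by
  have hX : IsClosed (X : Set H) := X.closed_of_finiteDimensional
  have hXY : IsClosed ((X ⊔ Y : Submodule ℂ H) : Set H) := (X ⊔ Y).closed_of_finiteDimensional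
  rw [Submodule.inf_orthogonal, codimIn_iff _ _ (Submodule.isClosed_orthogonal _)
    (Submodule.orthogonal_le le_sup_left), oa_perp_perp hXY]
  have h1 := codimIn_iff X (Y ⊔ X) hX le_sup_right n
  rw [inf_comm, sup_comm, ← h1]
  unfold CodimIn
  rw [inf_comm X Y, and_iff_right (le_sup_right : X ≤ Y ⊔ X),
    and_iff_right (inf_le_left : Y ⊓ X ≤ Y)]
  have h2 := oa_equiv (LinearMap.quotientInfEquivSupQuotient Y X) n
  rw [← Submodule.comap_inf] at h2
  exact h2.symm

theorem projCLM_perp (X : Submodule ℂ H) (h : IsClosed (X : Set H)) :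
    projCLM Xᗮ = 1 - projCLM X := by
  haveI : CompleteSpace X := h.completeSpace_coe
  ext x
  rw [projCLM, dif_pos (Submodule.isClosed_orthogonal X), projCLM, dif_pos h]
  exact Submodule.starProjection_orthogonal_val (K := X) x

theorem compat_perp (X Y : Submodule ℂ H) (hX : IsClosed (X : Set H)) (hY : IsClosed (Y : Set H)) :
    Compatible Xᗮ Yᗮ ↔ Compatible X Y := by
  unfold Compatible
  rw [projCLM_perp X hX, projCLM_perp Y hY]
  constructor
  · intro h
    have := ((Commute.one_left _).sub_left h)
    have := ((Commute.one_right _).sub_right this)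
    simpa using this
  · intro h
    exact (Commute.one_left _).sub_left ((Commute.one_right _).sub_right h)

theorem orthoAdj_perp (X Y : Submodule ℂ H) [FiniteDimensional ℂ X] [FiniteDimensional ℂ Y] :
    OrthoAdjacent Xᗮ Yᗮ ↔ OrthoAdjacent X Y := by
  unfold OrthoAdjacent Adjacent
  rw [compat_perp X Y X.closed_of_finiteDimensional Y.closed_of_finiteDimensional,
    codim_perp X Y, inf_comm Xᗮ, codim_perp Y X, inf_comm Y X, and_comm (a := CodimIn _ Y 1)]

theorem mem_GCk_iff (X : Submodule ℂ H) (hX : IsClosed (X : Set H)) (k : ℕ) :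
    X ∈ GCk (H := H) k ↔ Xᗮ ∈ Gk (H := H) k := by
  haveI : CompleteSpace X := hX.completeSpace_coe
  have e := Submodule.quotientEquivOfIsCompl X Xᗮ Submodule.isCompl_orthogonal_of_hasOrthogonalProjection
  exact (and_iff_right hX).trans (oa_equiv e k)

theorem Gk_perp {X : Submodule ℂ H} {k : ℕ} (h : X ∈ Gk (H := H) k) :
    Xᗮ ∈ GCk (H := H) k ∧ Xᗮᗮ = X := by
  haveI := h.1
  have := oa_perp_perp X.closed_of_finiteDimensional
  rw [mem_GCk_iff _ (Submodule.isClosed_orthogonal X), this]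
  exact ⟨h, rfl⟩

theorem GCk_perp {X : Submodule ℂ H} {k : ℕ} (h : X ∈ GCk (H := H) k) :
    Xᗮ ∈ Gk (H := H) k ∧ Xᗮᗮ = X :=
  ⟨(mem_GCk_iff X h.1 k).1 h, oa_perp_perp h.1⟩

theorem inner_conj_zero (U : H ≃ₗᵢ⋆[ℂ] H) (x y : H) :
    inner ℂ (U x) (U y) = 0 ↔ inner ℂ x y = 0 := by
  have h : inner ℂ (U x) (U y) = inner ℂ y x := by
    rw [inner_eq_sum_norm_sq_div_four, inner_eq_sum_norm_sq_div_four]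
    have h0 : U (Complex.I • y) = -(Complex.I • U y) := by
      have := U.map_smulₛₗ Complex.I y
      rw [this, Complex.conj_I, neg_smul]
    have h1 : U x + (Complex.I) • U y = U (x - Complex.I • y) := by
      rw [map_sub, h0, sub_neg_eq_add]
    have h2 : U x - (Complex.I) • U y = U (x + Complex.I • y) := by
      rw [map_add, h0, sub_eq_add_neg]
    have h3 : ‖x - Complex.I • y‖ = ‖y + Complex.I • x‖ := by
      have : y + Complex.I • x = Complex.I • (x - Complex.I • y) := by
        rw [smul_sub, smul_smul, Complex.I_mul_I]; module
      rw [this, norm_smul]; simp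
    have h4 : ‖x + Complex.I • y‖ = ‖y - Complex.I • x‖ := by
      have : y - Complex.I • x = (-Complex.I) • (x + Complex.I • y) := by
        rw [smul_add, smul_smul, neg_mul, Complex.I_mul_I]; module
      rw [this, norm_smul]; simp
    simp only [RCLike.I_to_complex]
    rw [h1, h2, ← map_add, ← map_sub]
    simp only [LinearIsometryEquiv.norm_map]
    rw [h3, h4, add_comm x y, norm_sub_rev x y]
  rw [h, inner_eq_zero_symm]

theorem map_perp {σ τ : ℂ →+* ℂ} [RingHomInvPair σ τ] [RingHomInvPair τ σ]
    (U : H ≃ₛₗᵢ[σ] H) (hU : ∀ x y, inner ℂ (U x) (U y) = 0 ↔ inner ℂ x y = 0)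
    (X : Submodule ℂ H) :
    (X.map U.toLinearEquiv.toLinearMap)ᗮ = Xᗮ.map U.toLinearEquiv.toLinearMap := by
  ext z
  obtain ⟨z, rfl⟩ := U.surjective z
  constructor
  · intro h
    refine ⟨z, ?_, rfl⟩
    intro x hx
    exact (hU x z).1 (h (U x) ⟨x, hx, rfl⟩)
  · rintro ⟨w, hw, hwz⟩ _ ⟨x, hx, rfl⟩
    have : w = z := U.injective hwz
    subst this
    exact (hU x w).2 (hw x hx)

theorem f_of_g {σ τ : ℂ →+* ℂ} [RingHomInvPair σ τ] [RingHomInvPair τ σ]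
    (U : H ≃ₛₗᵢ[σ] H) (hU : ∀ x y, inner ℂ (U x) (U y) = 0 ↔ inner ℂ x y = 0)
    (k : ℕ) (f : Submodule ℂ H → Submodule ℂ H)
    (hm : Set.MapsTo f (GCk (H := H) k) (GCk (H := H) k))
    (h : ∀ X ∈ Gk (H := H) k, (f Xᗮ)ᗮ = X.map U.toLinearEquiv.toLinearMap) :
    ∀ Y ∈ GCk (H := H) k, f Y = Y.map U.toLinearEquiv.toLinearMap := by
  intro Y hY
  have h1 := h _ (GCk_perp hY).1
  rw [← map_perp U hU, (GCk_perp hY).2] at h1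
  have h2 := congrArg Submodule.orthogonal h1
  rw [(GCk_perp (hm hY)).2, map_perp U hU, map_perp U hU, (GCk_perp hY).2] at h2
  exact h2

/-- for a bijective transformation `f` of `G^k(H)` preserving ortho-adjacency in
both directions, the map `g(X) = f(X^⊥)^⊥` is a bijective transformation of `G_k(H)`
preserving ortho-adjacency in both directions; and if `g` is induced by a unitary or
anti-unitary operator `U`, then so is `f`. -/
theorem stmt15 (hH : ¬FiniteDimensional ℂ H) (k : ℕ) (hk : 0 < k)
    (f : Submodule ℂ H → Submodule ℂ H)
    (hbij : Set.BijOn f (GCk (H := H) k) (GCk (H := H) k))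
    (hf : ∀ X ∈ GCk (H := H) k, ∀ Y ∈ GCk (H := H) k,
      OrthoAdjacent X Y ↔ OrthoAdjacent (f X) (f Y)) :
    Set.BijOn (fun X : Submodule ℂ H => (f Xᗮ)ᗮ) (Gk (H := H) k) (Gk (H := H) k) ∧
    (∀ X ∈ Gk (H := H) k, ∀ Y ∈ Gk (H := H) k,
      OrthoAdjacent X Y ↔ OrthoAdjacent ((f Xᗮ)ᗮ) ((f Yᗮ)ᗮ)) ∧
    (∀ U : H ≃ₗᵢ[ℂ] H,
      (∀ X ∈ Gk (H := H) k, (f Xᗮ)ᗮ = X.map U.toLinearEquiv.toLinearMap) →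
      ∀ Y ∈ GCk (H := H) k, f Y = Y.map U.toLinearEquiv.toLinearMap) ∧
    (∀ U : H ≃ₗᵢ⋆[ℂ] H,
      (∀ X ∈ Gk (H := H) k, (f Xᗮ)ᗮ = X.map U.toLinearEquiv.toLinearMap) →
      ∀ Y ∈ GCk (H := H) k, f Y = Y.map U.toLinearEquiv.toLinearMap) := by
  refine ⟨⟨?_, ?_, ?_⟩, ?_, ?_, ?_⟩
  · intro X hX
    exact (GCk_perp (hbij.mapsTo (Gk_perp hX).1)).1
  · intro X hX Y hY h
    have h2 := congrArg Submodule.orthogonal h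
    simp only [(GCk_perp (hbij.mapsTo (Gk_perp hX).1)).2,
      (GCk_perp (hbij.mapsTo (Gk_perp hY).1)).2] at h2
    have h3 := hbij.injOn (Gk_perp hX).1 (Gk_perp hY).1 h2
    rw [← (Gk_perp hX).2, h3, (Gk_perp hY).2]
  · intro Y hY
    obtain ⟨Z, hZ, hZY⟩ := hbij.surjOn (Gk_perp hY).1
    refine ⟨Zᗮ, (GCk_perp hZ).1, ?_⟩
    simp only [(GCk_perp hZ).2, hZY, (Gk_perp hY).2]
  · intro X hX Y hY
    haveI := hX.1
    haveI := hY.1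
    have h1 := GCk_perp (hbij.mapsTo (Gk_perp hX).1)
    have h2 := GCk_perp (hbij.mapsTo (Gk_perp hY).1)
    haveI := h1.1.1
    haveI := h2.1.1
    rw [← orthoAdj_perp X Y, hf _ (Gk_perp hX).1 _ (Gk_perp hY).1,
      ← orthoAdj_perp (f Xᗮ)ᗮ (f Yᗮ)ᗮ, h1.2, h2.2]
  · intro U h
    exact f_of_g U (fun x y => by rw [U.inner_map_map]) k f hbij.mapsTo h
  · intro U h
    exact f_of_g U (inner_conj_zero U) k f hbij.mapsTo h
end

section
/- For any adjacent X, Y ∈ G_∞(H) there exists Z ∈ G_∞(H) which is ortho-adjacent to both X and Y. -/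
open Module Submodule Classical

variable {H : Type*} [NormedAddCommGroup H] [InnerProductSpace ℂ H] [CompleteSpace H]

lemma aux_infdim (X : Submodule ℂ H) (v : H) (hX : ¬FiniteDimensional ℂ X) :
    ¬FiniteDimensional ℂ (X ⊓ LinearMap.ker (innerSL ℂ v).toLinearMap : Submodule ℂ H) := by
  intro h
  apply hX
  have h1 : (X ⊓ LinearMap.ker (innerSL ℂ v).toLinearMap : Submodule ℂ H).FG :=
    Module.Finite.iff_fg.mp h
  exact Module.Finite.iff_fg.mpr
    (Submodule.fg_of_fg_map_of_fg_inf_ker (innerSL ℂ v).toLinearMap (IsNoetherian.noetherian _) h1)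

lemma aux_dec (W X : Submodule ℂ H) (hW : IsClosed (W : Set H)) (h : CodimIn W X 1) :
    ∃ u : H, u ≠ 0 ∧ u ∈ Wᗮ ∧ X = W ⊔ span ℂ {u} := by
  haveI : CompleteSpace W := hW.completeSpace_coe
  obtain ⟨hle, -, h1⟩ := h
  obtain ⟨q, hq, hall⟩ := finrank_eq_one_iff'.mp h1
  obtain ⟨x, rfl⟩ := Submodule.Quotient.mk_surjective _ q
  have hx : (x : H) ∉ W := by
    intro hx
    exact hq ((Submodule.Quotient.mk_eq_zero _).mpr hx)
  have hp : W.starProjection (x : H) ∈ W := W.starProjection_apply_mem _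
  refine ⟨(x : H) - W.starProjection (x : H), ?_, W.sub_starProjection_mem_orthogonal _, ?_⟩
  · intro h0
    exact hx (by rw [sub_eq_zero.mp h0]; exact hp)
  · apply le_antisymm
    · intro y hy
      obtain ⟨c, hc⟩ := hall (Submodule.Quotient.mk ⟨y, hy⟩)
      rw [← Submodule.Quotient.mk_smul, eq_comm, Submodule.Quotient.eq] at hc
      have hc' : y - c • (x : H) ∈ W := hc
      have : y = (y - c • (x : H) + c • W.starProjection (x : H)) +
        c • ((x : H) - W.starProjection (x : H)) := by
        rw [smul_sub]; abel
      rw [this]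
      exact Submodule.add_mem_sup (W.add_mem hc' (W.smul_mem _ hp))
        (Submodule.smul_mem _ _ (Submodule.mem_span_singleton_self _))
    · refine sup_le hle ?_
      rw [Submodule.span_singleton_le_iff_mem]
      exact X.sub_mem x.2 (hle hp)

lemma aux_notmem (W : Submodule ℂ H) (u : H) (h0 : u ≠ 0) (hu : u ∈ Wᗮ) : u ∉ W := by
  intro h
  exact h0 (inner_self_eq_zero (𝕜 := ℂ).mp (hu u h))

lemma aux_codim (W : Submodule ℂ H) (u : H) (h0 : u ≠ 0) (hu : u ∈ Wᗮ) :
    CodimIn W (W ⊔ span ℂ {u}) 1 := by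
  have hm : u ∈ W ⊔ span ℂ {u} :=
    (le_sup_right : _ ≤ W ⊔ span ℂ {u}) (Submodule.mem_span_singleton_self u)
  have key : finrank ℂ (↥(W ⊔ span ℂ {u}) ⧸ W.comap (W ⊔ span ℂ {u}).subtype) = 1 := by
    refine finrank_eq_one (Submodule.Quotient.mk ⟨u, hm⟩) ?_ ?_
    · intro h
      have h' := (Submodule.Quotient.mk_eq_zero (W.comap (W ⊔ span ℂ {u}).subtype)).mp h
      exact aux_notmem W u h0 hu h'
    · intro q
      obtain ⟨⟨y, hy⟩, rfl⟩ := Submodule.Quotient.mk_surjective _ q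
      obtain ⟨w, hw, t, ht, hwt⟩ := Submodule.mem_sup.mp hy
      obtain ⟨c, rfl⟩ := Submodule.mem_span_singleton.mp ht
      refine ⟨c, ?_⟩
      rw [← Submodule.Quotient.mk_smul, eq_comm, Submodule.Quotient.eq]
      change y - c • u ∈ W
      rw [← hwt]; simpa using hw
  exact ⟨le_sup_left, Module.finite_of_finrank_pos (by omega), key⟩

lemma aux_inf (W : Submodule ℂ H) (u z : H) (hz0 : z ≠ 0) (hz : z ∈ Wᗮ)
    (huz : inner ℂ z u = 0) : (W ⊔ span ℂ {z}) ⊓ (W ⊔ span ℂ {u}) = W := by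
  apply le_antisymm _ (le_inf le_sup_left le_sup_left)
  rintro y ⟨h1, h2⟩
  obtain ⟨w, hw, t, ht, rfl⟩ := Submodule.mem_sup.mp h1
  obtain ⟨c, rfl⟩ := Submodule.mem_span_singleton.mp ht
  obtain ⟨w', hw', t, ht, he⟩ := Submodule.mem_sup.mp h2
  obtain ⟨d, rfl⟩ := Submodule.mem_span_singleton.mp ht
  have e := congrArg (inner ℂ z) he
  rw [inner_add_right, inner_add_right, inner_smul_right, inner_smul_right, huz,
    Submodule.inner_left_of_mem_orthogonal hw hz,
    Submodule.inner_left_of_mem_orthogonal hw' hz] at e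
  have : c = 0 := by simpa [hz0] using e.symm
  simpa [this] using hw

lemma aux_closed (W : Submodule ℂ H) (hW : IsClosed (W : Set H)) (u : H) :
    IsClosed ((W ⊔ span ℂ {u} : Submodule ℂ H) : Set H) :=
  Submodule.isClosed_sup_finiteDimensional W (span ℂ {u}) hW

lemma aux_proj (W : Submodule ℂ H) [CompleteSpace W] (hW : IsClosed (W : Set H)) (u : H)
    (hu : u ∈ Wᗮ) :
    projCLM (W ⊔ span ℂ {u}) = W.starProjection + (span ℂ {u}).starProjection := by
  have hc := aux_closed W hW u
  haveI : CompleteSpace (W ⊔ span ℂ {u} : Submodule ℂ H) := hc.completeSpace_coe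
  have e : projCLM (W ⊔ span ℂ {u}) = (W ⊔ span ℂ {u}).starProjection := by
    rw [projCLM, dif_pos hc]; rfl
  rw [e]
  ext x
  have hsu : (span ℂ {u} : Submodule ℂ H) ≤ Wᗮ := by
    rwa [Submodule.span_singleton_le_iff_mem]
  apply Submodule.eq_starProjection_of_mem_orthogonal
  · exact Submodule.add_mem_sup (W.starProjection_apply_mem _)
      ((span ℂ {u}).starProjection_apply_mem _)
  · rw [← Submodule.inf_orthogonal]
    have a := W.sub_starProjection_mem_orthogonal x
    have b := (span ℂ {u}).sub_starProjection_mem_orthogonal x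
    have c : (span ℂ {u}).starProjection x ∈ Wᗮ := hsu ((span ℂ {u}).starProjection_apply_mem _)
    have d : W.starProjection x ∈ (span ℂ {u})ᗮ :=
      (Submodule.le_orthogonal_iff_le_orthogonal.mp hsu) (W.starProjection_apply_mem _)
    constructor
    · have := Wᗮ.sub_mem a c
      simpa [sub_sub] using this
    · have := (span ℂ {u})ᗮ.sub_mem b d
      simpa [sub_sub, add_comm] using this

lemma aux_ortho_s16 (W : Submodule ℂ H) (hW : IsClosed (W : Set H)) (u z : H) (hu0 : u ≠ 0)
    (hu : u ∈ Wᗮ) (hz0 : z ≠ 0) (hz : z ∈ Wᗮ) (huz : inner ℂ z u = 0) :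
    OrthoAdjacent (W ⊔ span ℂ {z}) (W ⊔ span ℂ {u}) := by
  haveI : CompleteSpace W := hW.completeSpace_coe
  refine ⟨⟨?_, ?_⟩, ?_⟩
  · rw [aux_inf W u z hz0 hz huz]; exact aux_codim W z hz0 hz
  · rw [aux_inf W u z hz0 hz huz]; exact aux_codim W u hu0 hu
  · unfold Compatible
    rw [aux_proj W hW u hu, aux_proj W hW z hz]
    have com : ∀ U V : Submodule ℂ H, ∀ [U.HasOrthogonalProjection] [V.HasOrthogonalProjection],
        U ⟂ V → Commute U.starProjection V.starProjection := by
      intro U V _ _ h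
      exact (h.starProjection_comp_starProjection).trans
        (h.symm.starProjection_comp_starProjection).symm
    have o1 : W ⟂ span ℂ {u} := by
      apply Submodule.IsOrtho.symm
      change span ℂ {u} ≤ Wᗮ
      rwa [Submodule.span_singleton_le_iff_mem]
    have o2 : span ℂ {z} ⟂ W := by
      change span ℂ {z} ≤ Wᗮ
      rwa [Submodule.span_singleton_le_iff_mem]
    have o3 : span ℂ {z} ⟂ span ℂ {u} := by
      rw [Submodule.isOrtho_span]
      rintro a rfl b rfl
      exact huz
    exact ((Commute.refl _).add_right (com _ _ o1)).add_left
      ((com _ _ o2).add_right (com _ _ o3))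

/-- for any adjacent `X, Y ∈ G_∞(H)` there exists `Z ∈ G_∞(H)` ortho-adjacent
to both `X` and `Y`. -/
theorem stmt16 (hH : ¬FiniteDimensional ℂ H) (X Y : Submodule ℂ H)
    (hX : X ∈ Ginf (H := H)) (hY : Y ∈ Ginf (H := H)) (hadj : Adjacent X Y) :
    ∃ Z ∈ Ginf (H := H), OrthoAdjacent Z X ∧ OrthoAdjacent Z Y := by
  obtain ⟨hXc, hX1, hX2⟩ := hX
  obtain ⟨hYc, -, -⟩ := hY
  obtain ⟨hWX, hWY⟩ := hadj
  have hW : IsClosed ((X ⊓ Y : Submodule ℂ H) : Set H) := hXc.inter hYc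
  generalize X ⊓ Y = W at *
  obtain ⟨u, hu0, hu, rfl⟩ := aux_dec W X hW hWX
  obtain ⟨v, hv0, hv, rfl⟩ := aux_dec W Y hW hWY
  have hi := aux_infdim _ v hX2
  obtain ⟨z, ⟨hzX, hzv⟩, hz0⟩ := Submodule.exists_mem_ne_zero_of_ne_bot
    (p := (W ⊔ span ℂ {u})ᗮ ⊓ LinearMap.ker (innerSL ℂ v).toLinearMap) (by
      intro h; rw [h] at hi; exact hi inferInstance)
  have hzv' : inner ℂ z v = 0 := inner_eq_zero_symm.mp (by simpa using hzv)
  have hzW : z ∈ Wᗮ := Submodule.orthogonal_le le_sup_left hzX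
  have hzu : inner ℂ z u = 0 := Submodule.inner_left_of_mem_orthogonal
    ((le_sup_right : _ ≤ W ⊔ span ℂ {u}) (Submodule.mem_span_singleton_self u)) hzX
  refine ⟨W ⊔ span ℂ {z}, ⟨aux_closed W hW z, ?_, ?_⟩, aux_ortho_s16 W hW u z hu0 hu hz0 hzW hzu,
    aux_ortho_s16 W hW v z hv0 hv hz0 hzW hzv'⟩
  · intro h
    haveI : FiniteDimensional ℂ W := Submodule.finiteDimensional_of_le
      (le_sup_left : W ≤ W ⊔ span ℂ {z})
    exact hX1 inferInstance
  · intro h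
    have hj := aux_infdim _ z hX2
    apply hj
    apply Submodule.finiteDimensional_of_le (S₂ := (W ⊔ span ℂ {z})ᗮ)
    rintro y ⟨hy1, hy2⟩
    rw [← Submodule.inf_orthogonal W]
    refine ⟨Submodule.orthogonal_le le_sup_left hy1, ?_⟩
    rw [SetLike.mem_coe, Submodule.mem_orthogonal_singleton_iff_inner_right]
    simpa using hy2
end

section
/- Let X, Y ∈ G_∞(H) be compatible subspaces such that X ∩ Y has codimension 2 in both X and Y, let Z ∈ G_∞(H) be ortho-adjacent to both X and Y, let P = Z ∩ X ∩ (X ∩ Y)^⊥ and Q = Z ∩ Y ∩ (X ∩ Y)^⊥, let P' be the orthogonal complement of P in X ∩ (X ∩ Y)^⊥ and Q' the orthogonal complement of Q in Y ∩ (X ∩ Y)^⊥. Then the subspaces Z₁ = P' ⊕ (X ∩ Y) ⊕ Q and Z₂ = P ⊕ (X ∩ Y) ⊕ Q' are elements of G_∞(H) ortho-adjacent to each of X, Y and Z. -/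
open Module Submodule Classical

variable {H : Type*} [NormedAddCommGroup H] [InnerProductSpace ℂ H] [CompleteSpace H]

theorem aux_proj_eq {K : Submodule ℂ H} (hK : IsClosed (K : Set H)) {x a : H} (ha : a ∈ K)
    (hxa : x - a ∈ Kᗮ) : projCLM K x = a := by
  haveI : CompleteSpace K := hK.completeSpace_coe
  unfold projCLM
  rw [dif_pos hK]
  exact eq_starProjection_of_mem_orthogonal ha hxa

theorem aux_proj_dec {K : Submodule ℂ H} (hK : IsClosed (K : Set H)) (x : H) :
    ∃ a ∈ K, x - a ∈ Kᗮ := by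
  haveI : CompleteSpace K := hK.completeSpace_coe
  exact ⟨K.starProjection x, by simp, sub_starProjection_mem_orthogonal x⟩

theorem aux_hyper {W X : Submodule ℂ H} (h : CodimIn W X 1) {u : H} (hu : u ∈ X) (huW : u ∉ W) :
    X = W ⊔ ℂ ∙ u := by
  obtain ⟨hle, hfd, hr⟩ := h
  apply le_antisymm
  · intro x hx
    have hne : (Submodule.Quotient.mk ⟨u, hu⟩ : ↥X ⧸ W.comap X.subtype) ≠ 0 := by
      rw [Ne, Submodule.Quotient.mk_eq_zero]
      exact huW
    obtain ⟨c, hc⟩ := (finrank_eq_one_iff_of_nonzero' _ hne).1 hr (Submodule.Quotient.mk ⟨x, hx⟩)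
    rw [← Submodule.Quotient.mk_smul, eq_comm, Submodule.Quotient.eq] at hc
    have hc' : x - c • u ∈ W := hc
    rw [Submodule.mem_sup]
    exact ⟨_, hc', c • u, Submodule.smul_mem _ _ (Submodule.mem_span_singleton_self u), by simp⟩
  · refine sup_le hle ?_
    simpa using hu

theorem aux_two {W X : Submodule ℂ H} (h : CodimIn W X 2) {u : H} (hX : X = W ⊔ ℂ ∙ u) :
    False := by
  obtain ⟨hle, hfd, hr⟩ := h
  have hu : u ∈ X := by
    rw [hX]; exact Submodule.mem_sup_right (Submodule.mem_span_singleton_self u)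
  have := finrank_le_one (R := ℂ) (Submodule.Quotient.mk ⟨u, hu⟩ : ↥X ⧸ W.comap X.subtype) (by
    intro w
    obtain ⟨⟨x, hx⟩, rfl⟩ := Submodule.Quotient.mk_surjective _ w
    have hx' := hx
    rw [hX, Submodule.mem_sup] at hx'
    obtain ⟨y, hy, z, hz, hyz⟩ := hx'
    obtain ⟨c, rfl⟩ := Submodule.mem_span_singleton.1 hz
    refine ⟨c, ?_⟩
    rw [← Submodule.Quotient.mk_smul, eq_comm, Submodule.Quotient.eq]
    change x - c • u ∈ W
    rw [← hyz]; simpa using hy)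
  omega

theorem aux_codim_s17 {V : Submodule ℂ H} {b : H} (hb : b ∉ V) : CodimIn V (V ⊔ ℂ ∙ b) 1 := by
  have hm : b ∈ V ⊔ ℂ ∙ b := Submodule.mem_sup_right (Submodule.mem_span_singleton_self b)
  have : finrank ℂ (↥(V ⊔ ℂ ∙ b) ⧸ V.comap (V ⊔ ℂ ∙ b).subtype) = 1 := by
    refine finrank_eq_one (Submodule.Quotient.mk ⟨b, hm⟩) ?_ ?_
    · rw [Ne, Submodule.Quotient.mk_eq_zero]
      exact hb
    · intro w
      obtain ⟨⟨x, hx⟩, rfl⟩ := Submodule.Quotient.mk_surjective _ w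
      have hx' := hx
      rw [Submodule.mem_sup] at hx'
      obtain ⟨y, hy, z, hz, hyz⟩ := hx'
      obtain ⟨c, rfl⟩ := Submodule.mem_span_singleton.1 hz
      refine ⟨c, ?_⟩
      rw [← Submodule.Quotient.mk_smul, eq_comm, Submodule.Quotient.eq]
      change x - c • b ∈ V
      rw [← hyz]; simpa using hy
  exact ⟨le_sup_left, FiniteDimensional.of_finrank_pos (by omega), this⟩

theorem aux_closed_s17 {V : Submodule ℂ H} (hV : IsClosed (V : Set H)) (b : H) :
    IsClosed ((V ⊔ ℂ ∙ b : Submodule ℂ H) : Set H) :=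
  Submodule.isClosed_sup_finiteDimensional _ _ hV

theorem aux_ortho_sup {V B : Submodule ℂ H} {x : H} (h1 : x ∈ Vᗮ) (h2 : x ∈ Bᗮ) :
    x ∈ (V ⊔ B)ᗮ := by
  rw [← Submodule.inf_orthogonal]; exact ⟨h1, h2⟩

theorem aux_projprod {V B C : Submodule ℂ H} (hV : IsClosed (V : Set H))
    (hK : IsClosed ((V ⊔ B : Submodule ℂ H) : Set H))
    (hL : IsClosed ((V ⊔ C : Submodule ℂ H) : Set H))
    (hCV : C ≤ Vᗮ) (hCB : C ≤ Bᗮ) (x : H) :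
    projCLM (V ⊔ B) (projCLM (V ⊔ C) x) = projCLM V x := by
  obtain ⟨a, ha, hxa⟩ := aux_proj_dec hL x
  obtain ⟨v, hv, c, hc, rfl⟩ := Submodule.mem_sup.1 ha
  rw [aux_proj_eq hL ha hxa, aux_proj_eq hV hv, aux_proj_eq hK (Submodule.mem_sup_left hv)]
  · simpa using aux_ortho_sup (hCV hc) (hCB hc)
  · have h1 : x - (v + c) ∈ Vᗮ := Submodule.orthogonal_le le_sup_left hxa
    have := Submodule.add_mem _ h1 (hCV hc)
    convert this using 1; abel

theorem aux_adj {V : Submodule ℂ H} (hV : IsClosed (V : Set H)) {b c : H} (hb : b ≠ 0)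
    (hc : c ≠ 0) (hbV : b ∈ Vᗮ) (hcV : c ∈ Vᗮ) (hbc : inner ℂ b c = 0) :
    OrthoAdjacent (V ⊔ ℂ ∙ b) (V ⊔ ℂ ∙ c) := by
  have nb : b ∉ V := fun h => hb (by simpa using (Submodule.mem_orthogonal _ _).1 hbV b h)
  have nc : c ∉ V := fun h => hc (by simpa using (Submodule.mem_orthogonal _ _).1 hcV c h)
  have hinf : (V ⊔ ℂ ∙ b) ⊓ (V ⊔ ℂ ∙ c) = V := by
    refine le_antisymm ?_ (le_inf le_sup_left le_sup_left)
    rintro x ⟨h1, h2⟩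
    obtain ⟨v, hv, z, hz, rfl⟩ := Submodule.mem_sup.1 h1
    obtain ⟨s, rfl⟩ := Submodule.mem_span_singleton.1 hz
    have h3 : s • b ∈ V ⊔ ℂ ∙ c := by
      simpa using Submodule.sub_mem _ h2 (Submodule.mem_sup_left (T := ℂ ∙ c) hv)
    have h4 : s • b ∈ (V ⊔ ℂ ∙ c)ᗮ := Submodule.smul_mem _ _ (aux_ortho_sup hbV
      (Submodule.mem_orthogonal_singleton_iff_inner_left.2 hbc))
    have h5 : s • b = 0 := by simpa using (Submodule.mem_orthogonal _ _).1 h4 _ h3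
    rw [h5, add_zero]; exact hv
  refine ⟨⟨?_, ?_⟩, ?_⟩
  · rw [hinf]; exact aux_codim_s17 nb
  · rw [hinf]; exact aux_codim_s17 nc
  · have e1 : (ℂ ∙ b) ≤ Vᗮ := by simpa using hbV
    have e2 : (ℂ ∙ c) ≤ Vᗮ := by simpa using hcV
    have e3 : (ℂ ∙ b) ≤ (ℂ ∙ c)ᗮ := by
      rw [Submodule.span_singleton_le_iff_mem]
      exact Submodule.mem_orthogonal_singleton_iff_inner_left.2 hbc
    have e4 : (ℂ ∙ c) ≤ (ℂ ∙ b)ᗮ := by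
      rw [Submodule.span_singleton_le_iff_mem]
      exact Submodule.mem_orthogonal_singleton_iff_inner_right.2 hbc
    refine ContinuousLinearMap.ext fun x => ?_
    exact (aux_projprod hV (aux_closed_s17 hV b) (aux_closed_s17 hV c) e2 e4 x).trans
      (aux_projprod hV (aux_closed_s17 hV c) (aux_closed_s17 hV b) e1 e3 x).symm

theorem aux_ginf {V : Submodule ℂ H} (hV : IsClosed (V : Set H)) {b c : H}
    (hbV : b ∈ Vᗮ) (h : V ⊔ ℂ ∙ c ∈ Ginf (H := H)) : V ⊔ ℂ ∙ b ∈ Ginf (H := H) := by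
  obtain ⟨-, h1, h2⟩ := h
  refine ⟨aux_closed_s17 hV b, fun hf => h1 ?_, fun hf => h2 ?_⟩
  · haveI := hf
    haveI : FiniteDimensional ℂ V := Submodule.finiteDimensional_of_le (le_sup_left : V ≤ V ⊔ ℂ ∙ b)
    infer_instance
  · haveI := hf
    refine Submodule.finiteDimensional_of_le (S₂ := (V ⊔ ℂ ∙ b)ᗮ ⊔ ℂ ∙ b) ?_
    intro x hx
    have hxV : x ∈ Vᗮ := Submodule.orthogonal_le le_sup_left hx
    obtain ⟨a, ha, hxa⟩ := aux_proj_dec (Submodule.closed_of_finiteDimensional (ℂ ∙ b)) x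
    have haV : a ∈ Vᗮ := (show (ℂ ∙ b) ≤ Vᗮ by simpa using hbV) ha
    exact Submodule.mem_sup.2 ⟨x - a, aux_ortho_sup (Submodule.sub_mem _ hxV haV) hxa, a, ha,
      by simp⟩

theorem aux_orth {W X : Submodule ℂ H} (hW : IsClosed (W : Set H)) {u : H} (hu : u ∉ W)
    (hX : X = W ⊔ ℂ ∙ u) : ∃ p, p ≠ 0 ∧ p ∈ Wᗮ ∧ X = W ⊔ ℂ ∙ p ∧ X ⊓ Wᗮ = ℂ ∙ p := by
  obtain ⟨a, ha, hua⟩ := aux_proj_dec hW u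
  have hXp : X = W ⊔ ℂ ∙ (u - a) := by
    rw [hX]
    apply le_antisymm
    · refine sup_le le_sup_left ?_
      rw [Submodule.span_singleton_le_iff_mem]
      exact Submodule.mem_sup.2 ⟨a, ha, u - a, Submodule.mem_span_singleton_self _, by simp⟩
    · refine sup_le le_sup_left ?_
      rw [Submodule.span_singleton_le_iff_mem]
      exact Submodule.sub_mem _ (Submodule.mem_sup_right (Submodule.mem_span_singleton_self _))
        (Submodule.mem_sup_left ha)
  refine ⟨u - a, fun h => hu ?_, hua, hXp, ?_⟩
  · rw [sub_eq_zero.1 h]; exact ha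
  · have hle : (ℂ ∙ (u - a)) ≤ Wᗮ := by
      rw [Submodule.span_singleton_le_iff_mem]; exact hua
    rw [hXp, sup_comm, sup_inf_assoc_of_le _ hle, Submodule.inf_orthogonal_eq_bot, sup_bot_eq]

theorem aux_perp {X Y : Submodule ℂ H} (hX : IsClosed (X : Set H)) (hY : IsClosed (Y : Set H))
    (h : Compatible X Y) {a b : H} (ha : a ∈ X) (hb : b ∈ Y) (hb' : b ∈ (X ⊓ Y)ᗮ) :
    inner ℂ a b = 0 := by
  obtain ⟨w, hw, haw⟩ := aux_proj_dec hY a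
  obtain ⟨z, hz, hwz⟩ := aux_proj_dec hX w
  have e : projCLM X (projCLM Y a) = projCLM Y (projCLM X a) := congrArg (fun f => f a) h
  have e0 : projCLM X a = a := aux_proj_eq hX ha (by simp)
  rw [e0, aux_proj_eq hY hw haw, aux_proj_eq hX hz hwz] at e
  have h1 : inner ℂ w b = 0 := (Submodule.mem_orthogonal _ _).1 hb' w ⟨e ▸ hz, hw⟩
  have h2 : inner ℂ (a - w) b = 0 := (Submodule.mem_orthogonal' _ _).1 haw b hb
  rw [inner_sub_left, h1, sub_zero] at h2
  exact h2

/-- `X = (Z ⊓ X) ⊕ ⟨p'⟩`, `Z ⊓ X = W ⊕ ⟨p⟩`. -/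
theorem aux_half {X Z W : Submodule ℂ H} (hW : IsClosed (W : Set H)) (h1 : CodimIn (Z ⊓ X) X 1)
    {u : H} (hu : u ∉ W) (hZX : Z ⊓ X = W ⊔ ℂ ∙ u) (P P' : Submodule ℂ H)
    (hP : P = Z ⊓ X ⊓ Wᗮ) (hP' : P' = Pᗮ ⊓ (X ⊓ Wᗮ)) :
    ∃ p p' : H, p ≠ 0 ∧ p' ≠ 0 ∧ p ∈ Wᗮ ∧ p' ∈ Wᗮ ∧ inner ℂ p p' = 0 ∧ P = ℂ ∙ p ∧ P' = ℂ ∙ p' ∧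
      Z ⊓ X = W ⊔ ℂ ∙ p ∧ X = W ⊔ ℂ ∙ p ⊔ ℂ ∙ p' := by
  obtain ⟨p, hp0, hpW, hZp, hPp⟩ := aux_orth hW hu hZX
  have : ∃ x ∈ X, x ∉ Z ⊓ X := by
    by_contra! hcon
    have e : (Z ⊓ X).comap X.subtype = ⊤ := by
      ext ⟨x, hx⟩; simpa using (hcon x hx).1
    have h2 := h1.2.2
    rw [e] at h2
    rw [finrank_zero_of_subsingleton] at h2
    omega
  obtain ⟨x, hx, hxn⟩ := this
  have hX := aux_hyper h1 hx hxn
  rw [hZp] at hX hxn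
  obtain ⟨p', hp'0, hp'V, hXp', hPp'⟩ := aux_orth (aux_closed_s17 hW p) hxn hX
  have hPe : P = ℂ ∙ p := hP.trans hPp
  refine ⟨p, p', hp0, hp'0, hpW, Submodule.orthogonal_le le_sup_left hp'V, ?_, hPe, ?_, hZp, hXp'⟩
  · exact (Submodule.mem_orthogonal _ _).1 hp'V p
      (Submodule.mem_sup_right (Submodule.mem_span_singleton_self p))
  · rw [hP', hPe, ← hPp', ← Submodule.inf_orthogonal]
    ac_rfl

theorem aux_exists {X Y Z : Submodule ℂ H} (h2X : CodimIn (X ⊓ Y) X 2)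
    (hZX : Adjacent Z X) : ∃ u ∈ Z ⊓ X, u ∉ Y := by
  by_contra! hcon
  have hle : Z ⊓ X ≤ X ⊓ Y := fun x hx => ⟨hx.2, hcon x hx⟩
  have hx : ∃ x ∈ X, x ∉ X ⊓ Y := by
    by_contra! hh
    refine aux_two h2X (u := 0) ?_
    rw [Submodule.span_zero_singleton, sup_bot_eq]
    exact le_antisymm hh inf_le_left
  obtain ⟨x, hx, hxn⟩ := hx
  have := aux_hyper hZX.2 hx (fun h => hxn (hle h))
  refine aux_two h2X (u := x) (le_antisymm ?_ (sup_le inf_le_left (by simpa using hx)))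
  calc X = Z ⊓ X ⊔ ℂ ∙ x := this
    _ ≤ _ := sup_le_sup_right hle _

theorem aux_le {X Y Z : Submodule ℂ H} (h2X : CodimIn (X ⊓ Y) X 2)
    (hZX : Adjacent Z X) (hZY : Adjacent Z Y) : X ⊓ Y ≤ Z := by
  intro w hw
  by_contra hwZ
  obtain ⟨u, hu, huY⟩ := aux_exists h2X hZX
  have e1 := aux_hyper hZX.2 hw.1 (fun h => hwZ h.1)
  have e2 := aux_hyper hZY.1 hu.1 (fun h => huY h.2)
  refine aux_two h2X (u := u) (le_antisymm ?_ (sup_le inf_le_left (by simpa using hu.2)))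
  rw (occs := [1]) [e1]
  refine sup_le ?_ ?_
  · rintro x ⟨hxZ, hxX⟩
    rw [e2] at hxZ
    obtain ⟨y, hy, z, hz, rfl⟩ := Submodule.mem_sup.1 hxZ
    have hzX : z ∈ X := (show (ℂ ∙ u) ≤ X by simpa using hu.2) hz
    have hyX : y ∈ X := by simpa using Submodule.sub_mem _ hxX hzX
    exact Submodule.mem_sup.2 ⟨y, ⟨hyX, hy.2⟩, z, hz, rfl⟩
  · rw [Submodule.span_singleton_le_iff_mem]
    exact Submodule.mem_sup_left hw

theorem aux_inter {X Y Z : Submodule ℂ H} (h2X : CodimIn (X ⊓ Y) X 2)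
    (hZX : Adjacent Z X) (hZY : Adjacent Z Y) :
    ∃ u, u ∉ X ⊓ Y ∧ Z ⊓ X = X ⊓ Y ⊔ ℂ ∙ u ∧ Z = Z ⊓ Y ⊔ ℂ ∙ u := by
  obtain ⟨u, hu, huY⟩ := aux_exists h2X hZX
  have e2 := aux_hyper hZY.1 hu.1 (fun h => huY h.2)
  refine ⟨u, fun h => huY h.2, le_antisymm ?_ ?_, e2⟩
  · rintro x ⟨hxZ, hxX⟩
    rw [e2] at hxZ
    obtain ⟨y, hy, z, hz, rfl⟩ := Submodule.mem_sup.1 hxZ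
    have hzX : z ∈ X := (show (ℂ ∙ u) ≤ X by simpa using hu.2) hz
    have hyX : y ∈ X := by simpa using Submodule.sub_mem _ hxX hzX
    exact Submodule.mem_sup.2 ⟨y, ⟨hyX, hy.2⟩, z, hz, rfl⟩
  · refine sup_le (le_inf (aux_le h2X hZX hZY) inf_le_left) ?_
    rw [Submodule.span_singleton_le_iff_mem]
    exact hu

theorem aux_adj3 {W : Submodule ℂ H} (hW : IsClosed (W : Set H)) {a b c : H} (hb : b ≠ 0)
    (hc : c ≠ 0) (hbW : b ∈ Wᗮ) (hcW : c ∈ Wᗮ) (hab : inner ℂ a b = 0)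
    (hac : inner ℂ a c = 0) (hbc : inner ℂ b c = 0) {K L : Submodule ℂ H}
    (hK : K = W ⊔ ℂ ∙ a ⊔ ℂ ∙ b) (hL : L = W ⊔ ℂ ∙ a ⊔ ℂ ∙ c) : OrthoAdjacent K L := by
  rw [hK, hL]
  exact aux_adj (aux_closed_s17 hW a) hb hc
    (aux_ortho_sup hbW (Submodule.mem_orthogonal_singleton_iff_inner_right.2 hab))
    (aux_ortho_sup hcW (Submodule.mem_orthogonal_singleton_iff_inner_right.2 hac)) hbc

theorem aux_ginf3 {W : Submodule ℂ H} (hW : IsClosed (W : Set H)) {a b c : H}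
    (hbW : b ∈ Wᗮ) (hab : inner ℂ a b = 0) {K L : Submodule ℂ H}
    (hK : K = W ⊔ ℂ ∙ a ⊔ ℂ ∙ b) (hL : L = W ⊔ ℂ ∙ a ⊔ ℂ ∙ c) (h : L ∈ Ginf (H := H)) :
    K ∈ Ginf (H := H) := by
  rw [hL] at h
  rw [hK]
  exact aux_ginf (aux_closed_s17 hW a)
    (aux_ortho_sup hbW (Submodule.mem_orthogonal_singleton_iff_inner_right.2 hab)) h

/-- with `X, Y ∈ G_∞(H)` compatible, `X ∩ Y` of codimension 2 in both, `Z`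
ortho-adjacent to both, and `P, Q, P', Q'` as in Lemma 3.1, the subspaces
`Z₁ = P' ⊕ (X ∩ Y) ⊕ Q` and `Z₂ = P ⊕ (X ∩ Y) ⊕ Q'` belong to `G_∞(H)` and are
ortho-adjacent to each of `X, Y, Z`. -/
theorem stmt17 (hH : ¬FiniteDimensional ℂ H) (X Y Z : Submodule ℂ H)
    (hX : X ∈ Ginf (H := H)) (hY : Y ∈ Ginf (H := H)) (hZ : Z ∈ Ginf (H := H))
    (hcomp : Compatible X Y)
    (h2X : CodimIn (X ⊓ Y) X 2) (h2Y : CodimIn (X ⊓ Y) Y 2)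
    (hZX : OrthoAdjacent Z X) (hZY : OrthoAdjacent Z Y)
    (P Q P' Q' Z₁ Z₂ : Submodule ℂ H)
    (hP : P = Z ⊓ X ⊓ (X ⊓ Y)ᗮ) (hQ : Q = Z ⊓ Y ⊓ (X ⊓ Y)ᗮ)
    (hP' : P' = Pᗮ ⊓ (X ⊓ (X ⊓ Y)ᗮ)) (hQ' : Q' = Qᗮ ⊓ (Y ⊓ (X ⊓ Y)ᗮ))
    (hZ₁ : Z₁ = P' ⊔ (X ⊓ Y) ⊔ Q) (hZ₂ : Z₂ = P ⊔ (X ⊓ Y) ⊔ Q') :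
    Z₁ ∈ Ginf (H := H) ∧ Z₂ ∈ Ginf (H := H) ∧
    OrthoAdjacent Z₁ X ∧ OrthoAdjacent Z₁ Y ∧ OrthoAdjacent Z₁ Z ∧
    OrthoAdjacent Z₂ X ∧ OrthoAdjacent Z₂ Y ∧ OrthoAdjacent Z₂ Z := by
  have hXc := hX.1
  have hYc := hY.1
  have hW : IsClosed ((X ⊓ Y : Submodule ℂ H) : Set H) := hXc.inter hYc
  obtain ⟨u, hu, eu, eZ⟩ := aux_inter h2X hZX.1 hZY.1
  have h2Y' : CodimIn (Y ⊓ X) Y 2 := by rw [inf_comm]; exact h2Y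
  obtain ⟨v, hv, ev, -⟩ := aux_inter h2Y' hZY.1 hZX.1
  rw [inf_comm Y X] at hv ev
  obtain ⟨p, p', hp0, hp'0, hpW, hp'W, hpp', ePp, ePp', eZX, eX⟩ :=
    aux_half hW hZX.1.2 hu eu P P' hP hP'
  obtain ⟨q, q', hq0, hq'0, hqW, hq'W, hqq', eQq, eQq', eZY, eY⟩ :=
    aux_half hW hZY.1.2 hv ev Q Q' hQ hQ'
  have hZe : Z = X ⊓ Y ⊔ ℂ ∙ p ⊔ ℂ ∙ q := by
    have hpZ : p ∈ Z ⊓ X := by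
      rw [eZX]; exact Submodule.mem_sup_right (Submodule.mem_span_singleton_self p)
    have hpY : p ∉ Z ⊓ Y := fun h => hp0 (by
      simpa using (Submodule.mem_orthogonal _ _).1 hpW p ⟨hpZ.2, h.2⟩)
    rw [aux_hyper hZY.1.1 hpZ.1 hpY, eZY]
    ac_rfl
  have s {K : Submodule ℂ H} (x : H) : x ∈ K ⊔ ℂ ∙ x :=
    Submodule.mem_sup_right (Submodule.mem_span_singleton_self x)
  have mp : p ∈ X := by rw [eX]; exact Submodule.mem_sup_left (s p)
  have mp' : p' ∈ X := by rw [eX]; exact s p'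
  have mq : q ∈ Y := by rw [eY]; exact Submodule.mem_sup_left (s q)
  have mq' : q' ∈ Y := by rw [eY]; exact s q'
  have pq := aux_perp hXc hYc hcomp mp mq hqW
  have pq' := aux_perp hXc hYc hcomp mp mq' hq'W
  have p'q := aux_perp hXc hYc hcomp mp' mq hqW
  have p'q' := aux_perp hXc hYc hcomp mp' mq' hq'W
  have p'p := inner_eq_zero_symm.1 hpp'
  have q'q := inner_eq_zero_symm.1 hqq'
  have qp := inner_eq_zero_symm.1 pq
  have qp' := inner_eq_zero_symm.1 p'q
  have q'p := inner_eq_zero_symm.1 pq'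
  have q'p' := inner_eq_zero_symm.1 p'q'
  rw [ePp', eQq] at hZ₁
  rw [ePp, eQq'] at hZ₂
  clear hP hQ hP' hQ' eu eZ ev eZX eZY hZX hZY
  generalize X ⊓ Y = W at *
  have Xs : X = W ⊔ ℂ ∙ p' ⊔ ℂ ∙ p := by rw [eX]; ac_rfl
  have Ys : Y = W ⊔ ℂ ∙ q' ⊔ ℂ ∙ q := by rw [eY]; ac_rfl
  have Zs : Z = W ⊔ ℂ ∙ q ⊔ ℂ ∙ p := by rw [hZe]; ac_rfl
  have A : Z₁ = W ⊔ ℂ ∙ p' ⊔ ℂ ∙ q := by rw [hZ₁]; ac_rfl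
  have As : Z₁ = W ⊔ ℂ ∙ q ⊔ ℂ ∙ p' := by rw [hZ₁]; ac_rfl
  have B : Z₂ = W ⊔ ℂ ∙ p ⊔ ℂ ∙ q' := by rw [hZ₂]; ac_rfl
  have Bs : Z₂ = W ⊔ ℂ ∙ q' ⊔ ℂ ∙ p := by rw [hZ₂]; ac_rfl
  exact ⟨aux_ginf3 hW hqW p'q A Xs hX, aux_ginf3 hW hq'W pq' B eX hX,
    aux_adj3 hW hq0 hp0 hqW hpW p'q p'p qp A Xs,
    aux_adj3 hW hp'0 hq'0 hp'W hq'W qp' hqq' p'q' As eY,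
    aux_adj3 hW hp'0 hp0 hp'W hpW qp' qp p'p As Zs,
    aux_adj3 hW hq'0 hp'0 hq'W hp'W pq' hpp' q'p' B eX,
    aux_adj3 hW hp0 hq0 hpW hqW q'p q'q pq Bs Ys,
    aux_adj3 hW hq'0 hq0 hq'W hqW pq' pq q'q B hZe⟩
end
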